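/- arXiv:2204.10354 — 2 statements merged into one kernel-verified Lean document; each statement's English description precedes it below -/
import Mathlib

section
/- Let Γ be a group, c a 2-cycle on Γ, 0 < ε < 1, ρ₀ : Γ → U(n) a function into the n×n complex unitary matrices that is ε-almost multiplicative on the support of c, and ρ₁ : Γ → Mₙ(ℂ) a function such that ‖ρ₀(g) − ρ₁(g)‖ < (1−ε)/24 for all g in the boundary support of c. Then ρ₁ is 1-almost multiplicative on the support of c, and ρ₀ and ρ₁ are homotopy equivalent on the boundary support of c. -/
noncomputable section
open scoped Classical

/-- The algebra of "n×n complex matrices" realized as bounded operators on `ℓ²(Fin n)`,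
equipped with the ℓ²-operator norm. -/
abbrev Mat (n : ℕ) := EuclideanSpace ℂ (Fin n) →L[ℂ] EuclideanSpace ℂ (Fin n)

/-- The boundary of a 2-chain. -/
def chainBoundary {Γ : Type*} [Group Γ] (c : (Γ × Γ) →₀ ℤ) : Γ → ℤ :=
  fun g => c.sum fun p x =>
    x * ((if p.2 = g then 1 else 0) - (if p.1 * p.2 = g then 1 else 0) +
      (if p.1 = g then 1 else 0))

/-- A 2-chain is a 2-cycle if its boundary vanishes. -/
def IsTwoCycle {Γ : Type*} [Group Γ] (c : (Γ × Γ) →₀ ℤ) : Prop :=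
  chainBoundary c = 0

/-- The boundary support of a 2-chain: all `aᵢ`, `bᵢ`, `aᵢbᵢ` for `(aᵢ,bᵢ)` in the support. -/
def boundarySupport {Γ : Type*} [Group Γ] (c : (Γ × Γ) →₀ ℤ) : Set Γ :=
  ⋃ p ∈ c.support, {p.1, p.2, p.1 * p.2}

/-- The pairing of a ℤ-valued 2-cochain with a 2-chain. -/
def pairInt {Γ : Type*} [Group Γ] (σ : Γ → Γ → ℤ) (c : (Γ × Γ) →₀ ℤ) : ℤ :=
  c.sum fun p x => x * σ p.1 p.2

/-- ℤ-valued 2-cocycle condition. -/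
def IsTwoCocycle {Γ : Type*} [Group Γ] (σ : Γ → Γ → ℤ) : Prop :=
  ∀ g₁ g₂ g₃ : Γ, σ g₂ g₃ - σ (g₁ * g₂) g₃ + σ g₁ (g₂ * g₃) - σ g₁ g₂ = 0

/-- The logarithm defined as a power series centered at 1. -/
def matLog {n : ℕ} (m : Mat n) : Mat n :=
  ∑' k : ℕ, ((-1 : ℂ) ^ k / (k + 1)) • (m - 1) ^ (k + 1)

/-- Trace of an operator. -/
def clmTrace {n : ℕ} (f : Mat n) : ℂ :=
  LinearMap.trace ℂ (EuclideanSpace ℂ (Fin n)) (f : EuclideanSpace ℂ (Fin n) →ₗ[ℂ] EuclideanSpace ℂ (Fin n))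

/-- `ρ` is ε-almost multiplicative on the support of `c`. -/
def AlmostMultOn {Γ : Type*} [Group Γ] {n : ℕ} (ρ : Γ → Mat n)
    (c : (Γ × Γ) →₀ ℤ) (ε : ℝ) : Prop :=
  ∀ p ∈ c.support, IsUnit (ρ p.1) ∧ IsUnit (ρ p.2) ∧
    ‖ρ (p.1 * p.2) * Ring.inverse (ρ p.1) * Ring.inverse (ρ p.2) - 1‖ < ε

/-- The pairing `⟨ρ,c⟩` between an almost multiplicative map and a 2-chain. -/
def pairRho {Γ : Type*} [Group Γ] {n : ℕ} (ρ : Γ → Mat n) (c : (Γ × Γ) →₀ ℤ) : ℂ :=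
  (1 / (2 * Real.pi * Complex.I)) *
    c.sum fun p x => (x : ℂ) *
      clmTrace (matLog (ρ (p.1 * p.2) * Ring.inverse (ρ p.2) * Ring.inverse (ρ p.1)))

/-- A sequence of unitary-valued maps forms an asymptotic representation. -/
def IsAsymptoticRep {Γ : Type*} [Group Γ] (N : ℕ → ℕ) (ρ : ∀ k, Γ → Mat (N k)) : Prop :=
  (∀ k g, ρ k g ∈ unitary (Mat (N k))) ∧
    ∀ g h : Γ, Filter.Tendsto (fun k => ‖ρ k (g * h) - ρ k g * ρ k h‖)
      Filter.atTop (nhds 0)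

/-- An asymptotic representation is perturbable to a genuine representation. -/
def Perturbable {Γ : Type*} [Group Γ] (N : ℕ → ℕ) (ρ : ∀ k, Γ → Mat (N k)) : Prop :=
  ∃ ρ' : ∀ k, Γ →* unitary (Mat (N k)),
    ∀ g : Γ, Filter.Tendsto (fun k => ‖ρ k g - (ρ' k g : Mat (N k))‖)
      Filter.atTop (nhds 0)

/-- Matricial stability. -/
def MatriciallyStable (Γ : Type*) [Group Γ] : Prop :=
  ∀ (N : ℕ → ℕ) (ρ : ∀ k, Γ → Mat (N k)), IsAsymptoticRep N ρ → Perturbable N ρ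

/-- `ρ₀` and `ρ₁` are homotopy equivalent on the boundary support of `c`: a continuous
family `ρᵗ`, `t ∈ [0,1]`, of maps, each 1-almost multiplicative on the support of `c`,
interpolates between them on the boundary support of `c`. -/
def HomotopyEquivOn {Γ : Type*} [Group Γ] {n : ℕ} (c : (Γ × Γ) →₀ ℤ)
    (ρ₀ ρ₁ : Γ → Mat n) : Prop :=
  ∃ ρ : Set.Icc (0 : ℝ) 1 → Γ → Mat n,
    (∀ g : Γ, Continuous fun t => ρ t g) ∧
    (∀ g ∈ boundarySupport c, ρ ⟨0, by norm_num⟩ g = ρ₀ g) ∧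
    (∀ g ∈ boundarySupport c, ρ ⟨1, by norm_num⟩ g = ρ₁ g) ∧
    ∀ t, AlmostMultOn (ρ t) c 1

/-!
For units `v`, `w` the defect `u v⁻¹ w⁻¹ - 1` is `(u - w v) v⁻¹ w⁻¹`. If `v`, `w` and their inverses
have norm at most `1`, as for unitaries, then `‖u - w v‖` is at most the norm of the defect. Moving
`u`, `v`, `w` by at most `δ < 1` increases it by at most `3 δ + δ²`, and the new inverses have norm
at most `(1 - δ)⁻¹`. Hence a defect below `ε` stays below `(ε + 3 δ + δ²) / (1 - δ)²`, which is at
most `1` exactly when `ε + 5 δ ≤ 1`. Balls are convex, so the same estimate applies along the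
straight-line homotopy.
-/

open scoped Ring

section NormedRing

variable {A : Type*} [NormedRing A]

theorem norm_mul_inverse_mul_inverse_sub_one_le (x : A) {y z : A} (hy : IsUnit y)
    (hz : IsUnit z) :
    ‖x * y⁻¹ʳ * z⁻¹ʳ - 1‖ ≤ ‖x - z * y‖ * ‖y⁻¹ʳ‖ * ‖z⁻¹ʳ‖ := by
  have factor : x * y⁻¹ʳ * z⁻¹ʳ - 1 = (x - z * y) * y⁻¹ʳ * z⁻¹ʳ := by
    rw [sub_mul, sub_mul, Ring.mul_inverse_cancel_right _ _ hy, Ring.mul_inverse_cancel z hz]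
  rw [factor]
  exact norm_mul₃_le

theorem norm_sub_mul_le_norm_mul_inverse_mul_inverse_sub_one (x : A) {y z : A} (hy : IsUnit y)
    (hz : IsUnit z) :
    ‖x - z * y‖ ≤ ‖x * y⁻¹ʳ * z⁻¹ʳ - 1‖ * ‖z‖ * ‖y‖ := by
  have factor : x - z * y = (x * y⁻¹ʳ * z⁻¹ʳ - 1) * z * y := by
    rw [sub_mul, sub_mul, one_mul, Ring.inverse_mul_cancel_right _ _ hz,
      Ring.inverse_mul_cancel_right _ _ hy]
  rw [factor]
  exact norm_mul₃_le

theorem norm_mul_sub_mul_le (w v z y : A) :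
    ‖w * v - z * y‖ ≤ ‖w - z‖ * ‖v‖ + ‖z‖ * ‖v - y‖ := by
  have split : w * v - z * y = (w - z) * v + z * (v - y) := by noncomm_ring
  rw [split]
  exact norm_add_le_of_le (norm_mul_le _ _) (norm_mul_le _ _)

theorem norm_mul_sub_mul_le_of_norm_le_one {w v z y : A} {δ : ℝ} (hw : ‖w‖ ≤ 1) (hv : ‖v‖ ≤ 1)
    (hz : ‖w - z‖ ≤ δ) (hy : ‖v - y‖ ≤ δ) : ‖w * v - z * y‖ ≤ 2 * δ + δ ^ 2 := by
  have norm_z : ‖z‖ ≤ 1 + δ := (norm_le_norm_add_norm_sub w z).trans (add_le_add hw hz)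
  have hδ : 0 ≤ δ := (norm_nonneg _).trans hy
  calc ‖w * v - z * y‖ ≤ ‖w - z‖ * ‖v‖ + ‖z‖ * ‖v - y‖ := norm_mul_sub_mul_le w v z y
    _ ≤ δ * 1 + (1 + δ) * δ := by gcongr
    _ = 2 * δ + δ ^ 2 := by ring

theorem isUnit_of_norm_inverse_mul_norm_sub_lt_one [HasSummableGeomSeries A] {v y : A}
    (hv : IsUnit v) (h : ‖v⁻¹ʳ‖ * ‖v - y‖ < 1) : IsUnit y := by
  have factor : y = v * (1 - v⁻¹ʳ * (v - y)) := by
    rw [mul_sub, Ring.mul_inverse_cancel_left _ _ hv, mul_one, sub_sub_cancel]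
  rw [factor]
  exact hv.mul (isUnit_one_sub_of_norm_lt_one ((norm_mul_le _ _).trans_lt h))

theorem norm_inverse_le_div_one_sub {v y : A} (hv : IsUnit v) (hy : IsUnit y)
    (h : ‖v⁻¹ʳ‖ * ‖v - y‖ < 1) : ‖y⁻¹ʳ‖ ≤ ‖v⁻¹ʳ‖ / (1 - ‖v⁻¹ʳ‖ * ‖v - y‖) := by
  have resolvent : y⁻¹ʳ = v⁻¹ʳ + v⁻¹ʳ * (v - y) * y⁻¹ʳ := by
    rw [mul_sub, sub_mul, Ring.inverse_mul_cancel v hv, one_mul, mul_assoc,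
      Ring.mul_inverse_cancel y hy, mul_one, add_sub_cancel]
  have self_bound : ‖y⁻¹ʳ‖ ≤ ‖v⁻¹ʳ‖ + ‖v⁻¹ʳ‖ * ‖v - y‖ * ‖y⁻¹ʳ‖ :=
    (congrArg norm resolvent).trans_le (norm_add_le_of_le le_rfl norm_mul₃_le)
  rw [le_div_iff₀ (sub_pos.mpr h)]
  linarith

/-- A unit of norm at most `1` whose inverse also has norm at most `1`. Among the bounded operators
on a Hilbert space these are the unitaries; among those on a Banach space, the surjective
isometries. -/
structure IsIsometricUnit (v : A) : Prop where
  isUnit : IsUnit v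
  norm_le_one : ‖v‖ ≤ 1
  norm_inverse_le_one : ‖v⁻¹ʳ‖ ≤ 1

namespace IsIsometricUnit

variable {v w y z : A} {δ : ℝ}

theorem norm_inverse_mul_norm_sub_le (hv : IsIsometricUnit v) (h : ‖v - y‖ ≤ δ) :
    ‖v⁻¹ʳ‖ * ‖v - y‖ ≤ δ :=
  (mul_le_of_le_one_left (norm_nonneg _) hv.norm_inverse_le_one).trans h

theorem isUnit_of_norm_sub_lt_one [HasSummableGeomSeries A] (hv : IsIsometricUnit v)
    (h : ‖v - y‖ < 1) : IsUnit y :=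
  isUnit_of_norm_inverse_mul_norm_sub_lt_one hv.isUnit
    ((hv.norm_inverse_mul_norm_sub_le le_rfl).trans_lt h)

theorem norm_inverse_le_inv_one_sub (hv : IsIsometricUnit v) (hy : IsUnit y) (h : ‖v - y‖ ≤ δ)
    (hδ : δ < 1) : ‖y⁻¹ʳ‖ ≤ (1 - δ)⁻¹ := by
  have small : ‖v⁻¹ʳ‖ * ‖v - y‖ ≤ δ := hv.norm_inverse_mul_norm_sub_le h
  calc ‖y⁻¹ʳ‖ ≤ ‖v⁻¹ʳ‖ / (1 - ‖v⁻¹ʳ‖ * ‖v - y‖) :=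
        norm_inverse_le_div_one_sub hv.isUnit hy (small.trans_lt hδ)
    _ ≤ 1 / (1 - δ) := by
      gcongr
      exact hv.norm_inverse_le_one
    _ = (1 - δ)⁻¹ := one_div _

theorem norm_mul_inverse_mul_inverse_sub_one_lt {u x : A} {ε : ℝ} (hv : IsIsometricUnit v)
    (hw : IsIsometricUnit w) (unit_y : IsUnit y) (unit_z : IsUnit z) (hx : ‖u - x‖ ≤ δ)
    (hy : ‖v - y‖ ≤ δ) (hz : ‖w - z‖ ≤ δ) (hδ : δ < 1) (hε : ε + 5 * δ ≤ 1)
    (h : ‖u * v⁻¹ʳ * w⁻¹ʳ - 1‖ < ε) : ‖x * y⁻¹ʳ * z⁻¹ʳ - 1‖ < 1 := by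
  have old_error : ‖u - w * v‖ < ε :=
    calc ‖u - w * v‖ ≤ ‖u * v⁻¹ʳ * w⁻¹ʳ - 1‖ * ‖w‖ * ‖v‖ :=
          norm_sub_mul_le_norm_mul_inverse_mul_inverse_sub_one u hv.isUnit hw.isUnit
      _ ≤ ‖u * v⁻¹ʳ * w⁻¹ʳ - 1‖ * 1 * 1 := by
        gcongr
        exacts [hw.norm_le_one, hv.norm_le_one]
      _ < ε := by rwa [mul_one, mul_one]
  have new_error : ‖x - z * y‖ < (1 - δ) ^ 2 :=
    calc ‖x - z * y‖ = ‖(x - u) + (u - w * v) + (w * v - z * y)‖ := by congr 1; abel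
      _ ≤ ‖x - u‖ + ‖u - w * v‖ + ‖w * v - z * y‖ := norm_add₃_le
      _ < δ + ε + (2 * δ + δ ^ 2) := by
        have product_error :=
          norm_mul_sub_mul_le_of_norm_le_one hw.norm_le_one hv.norm_le_one hz hy
        rw [norm_sub_rev] at hx
        linarith
      _ ≤ (1 - δ) ^ 2 := by linarith
  have pos : 0 < 1 - δ := sub_pos.mpr hδ
  calc ‖x * y⁻¹ʳ * z⁻¹ʳ - 1‖ ≤ ‖x - z * y‖ * ‖y⁻¹ʳ‖ * ‖z⁻¹ʳ‖ :=
        norm_mul_inverse_mul_inverse_sub_one_le x unit_y unit_z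
    _ ≤ ‖x - z * y‖ * (1 - δ)⁻¹ * (1 - δ)⁻¹ := by
      gcongr
      · exact hv.norm_inverse_le_inv_one_sub unit_y hy hδ
      · exact hw.norm_inverse_le_inv_one_sub unit_z hz hδ
    _ < (1 - δ) ^ 2 * (1 - δ)⁻¹ * (1 - δ)⁻¹ := by gcongr
    _ = 1 := by field_simp

end IsIsometricUnit

theorem isIsometricUnit_of_mem_unitary [StarRing A] [CStarRing A] {v : A}
    (hv : v ∈ unitary A) : IsIsometricUnit v := by
  have norm_le_one {u : A} (hu : u ∈ unitary A) : ‖u‖ ≤ 1 := by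
    cases subsingleton_or_nontrivial A
    · simp only [Subsingleton.elim u 0, norm_zero, zero_le_one]
    · exact (CStarRing.norm_of_mem_unitary hu).le
  have inverse_eq_star : v⁻¹ʳ = star v := Ring.inverse_unit (Unitary.toUnits ⟨v, hv⟩)
  refine ⟨(Unitary.toUnits ⟨v, hv⟩).isUnit, norm_le_one hv, ?_⟩
  rw [inverse_eq_star]
  exact norm_le_one (Unitary.star_mem hv)

end NormedRing

theorem norm_sub_segment_le {E : Type*} [SeminormedAddCommGroup E] [NormedSpace ℝ E] (a b : E)
    (t : unitInterval) : ‖a - Path.segment a b t‖ ≤ ‖a - b‖ := by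
  rw [← dist_eq_norm, ← dist_eq_norm, dist_comm, Path.segment_apply, dist_lineMap_left,
    Real.norm_of_nonneg t.2.1]
  exact mul_le_of_le_one_left dist_nonneg t.2.2

section AlmostMultiplicative

variable {Γ A : Type*} [Mul Γ] [NormedRing A]

/-- The boundary support of a set `S` of pairs: a pair `(a, b)` stands for the 2-simplex `[a|b]` of
the bar complex, whose edges are `a`, `b` and `a * b`. -/
def barEdges (S : Set (Γ × Γ)) : Set Γ :=
  ⋃ p ∈ S, {p.1, p.2, p.1 * p.2}

/-- Almost multiplicativity on an arbitrary set of pairs, for functions with values in any normed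
ring. As in `AlmostMultOn`, the order of the two inverses compares `ρ (a * b)` with `ρ b * ρ a`. -/
def IsAlmostMulOn (ρ : Γ → A) (S : Set (Γ × Γ)) (ε : ℝ) : Prop :=
  ∀ p ∈ S, IsUnit (ρ p.1) ∧ IsUnit (ρ p.2) ∧
    ‖ρ (p.1 * p.2) * (ρ p.1)⁻¹ʳ * (ρ p.2)⁻¹ʳ - 1‖ < ε

variable [HasSummableGeomSeries A] {S : Set (Γ × Γ)} {ε : ℝ} {ρ₀ ρ₁ : Γ → A}

theorem IsAlmostMulOn.of_norm_sub_le (hρ₀ : IsAlmostMulOn ρ₀ S ε)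
    (hu : ∀ g ∈ barEdges S, IsIsometricUnit (ρ₀ g))
    (hclose : ∀ g ∈ barEdges S, ‖ρ₀ g - ρ₁ g‖ ≤ (1 - ε) / 5) : IsAlmostMulOn ρ₁ S 1 := by
  intro p hp
  have edge {g : Γ} (hg : g ∈ ({p.1, p.2, p.1 * p.2} : Set Γ)) : g ∈ barEdges S :=
    Set.mem_biUnion hp hg
  have left : p.1 ∈ barEdges S := edge (by simp)
  have right : p.2 ∈ barEdges S := edge (by simp)
  have product : p.1 * p.2 ∈ barEdges S := edge (by simp)
  have defect := (hρ₀ p hp).2.2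
  have hδ : (1 - ε) / 5 < 1 := by linarith [(norm_nonneg _).trans_lt defect]
  have unit_left := (hu _ left).isUnit_of_norm_sub_lt_one ((hclose _ left).trans_lt hδ)
  have unit_right := (hu _ right).isUnit_of_norm_sub_lt_one ((hclose _ right).trans_lt hδ)
  exact ⟨unit_left, unit_right, (hu _ left).norm_mul_inverse_mul_inverse_sub_one_lt (hu _ right)
    unit_left unit_right (hclose _ product) (hclose _ left) (hclose _ right) hδ
    (by linarith) defect⟩

theorem stmt13_general [NormedSpace ℝ A] (hu : ∀ g ∈ barEdges S, IsIsometricUnit (ρ₀ g))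
    (hρ₀ : IsAlmostMulOn ρ₀ S ε)
    (hclose : ∀ g ∈ barEdges S, ‖ρ₀ g - ρ₁ g‖ ≤ (1 - ε) / 5) :
    IsAlmostMulOn ρ₁ S 1 ∧
      ∀ t, IsAlmostMulOn (fun g => Path.segment (ρ₀ g) (ρ₁ g) t) S 1 :=
  ⟨hρ₀.of_norm_sub_le hu hclose, fun t => hρ₀.of_norm_sub_le hu fun g hg =>
    (norm_sub_segment_le _ _ t).trans (hclose g hg)⟩

end AlmostMultiplicative

/-- If `ρ₀` is unitary-valued and `ε`-almost multiplicative on the support of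
a 2-cycle `c` (`0 < ε < 1`) and `ρ₁` is within `(1-ε)/24` of `ρ₀` on the boundary support
of `c`, then `ρ₁` is 1-almost multiplicative on the support of `c` and `ρ₀`, `ρ₁` are
homotopy equivalent on the boundary support of `c`. -/
theorem stmt13 {Γ : Type*} [Group Γ] {n : ℕ} (c : (Γ × Γ) →₀ ℤ) (hc : IsTwoCycle c)
    {ε : ℝ} (hε0 : 0 < ε) (hε1 : ε < 1)
    (ρ₀ : Γ → Mat n) (hu : ∀ g : Γ, ρ₀ g ∈ unitary (Mat n))
    (hρ₀ : AlmostMultOn ρ₀ c ε) (ρ₁ : Γ → Mat n)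
    (hclose : ∀ g ∈ boundarySupport c, ‖ρ₀ g - ρ₁ g‖ < (1 - ε) / 24) :
    AlmostMultOn ρ₁ c 1 ∧ HomotopyEquivOn c ρ₀ ρ₁ := by
  obtain ⟨hρ₁, hsegment⟩ := stmt13_general (S := (c.support : Set (Γ × Γ)))
    (fun g _ => isIsometricUnit_of_mem_unitary (hu g)) hρ₀
    fun g hg => (hclose g hg).le.trans (by linarith)
  exact ⟨hρ₁, fun t g => Path.segment (ρ₀ g) (ρ₁ g) t, fun g => (Path.segment _ _).continuous,
    fun g _ => (Path.segment _ _).source, fun g _ => (Path.segment _ _).target, hsegment⟩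
end
end

section
/- Let m₁ and m₂ be n×n complex unitary matrices such that ‖m₁ − I‖ < 1/2 and ‖m₂ − I‖ < 1/2 in the ℓ²-operator norm. Define log(m) = Σ_{k=1}^∞ (−1)^{k+1}(m − I)ᵏ/k (this series converges for ‖m − I‖ < 1; note ‖m₁m₂ − I‖ < 1). Then Tr(log(m₁m₂)) = Tr(log(m₁)) + Tr(log(m₂)). -/
noncomputable section

/-!
For a tracial functional `τ`, cyclicity gathers the noncommutative derivative of `τ (x ^ k)` into
`v ↦ k τ (x ^ (k - 1) v)`, so `τ ∘ log` has derivative `v ↦ τ (a⁻¹ v)` on the unit ball around `1`.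
Hence `b ↦ τ (log (a b))` and `b ↦ τ (log a) + τ (log b)` have the same derivative
`v ↦ τ ((a b)⁻¹ a v) = τ (b⁻¹ v)`. They agree at `b = 1`, and the set of `b` with `‖b - 1‖ < 1` and
`‖a b - 1‖ < 1` is convex, so they agree on all of it. Left multiplication by a unitary is
isometric, whence `‖m₁ m₂ - 1‖ ≤ ‖m₁ - 1‖ + ‖m₂ - 1‖ < 1`.
-/

section TracialLog

variable {𝕜 A F : Type*} [NormedRing A] [NormedAddCommGroup F]

theorem isUnit_of_norm_sub_one_lt_one [HasSummableGeomSeries A] {a : A} (ha : ‖a - 1‖ < 1) :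
    IsUnit a :=
  not_not.1 fun h => nonunits.subset_compl_ball h (mem_ball_iff_norm.2 ha)

section NontriviallyNormedField

variable [NontriviallyNormedField 𝕜] [NormedAlgebra 𝕜 A] [NormedSpace 𝕜 F]

theorem hasFDerivAt_tracial_pow {τ : A →L[𝕜] F} (hτ : ∀ a b, τ (a * b) = τ (b * a)) (n : ℕ)
    (x : A) :
    HasFDerivAt (fun y => τ (y ^ n))
      (n • τ.comp (ContinuousLinearMap.mul 𝕜 A (x ^ (n - 1)))) x := by
  refine (τ.hasFDerivAt.comp x (hasFDerivAt_pow' (𝕜 := 𝕜) n)).congr_fderiv ?_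
  ext v
  have cyclic : ∀ i ∈ Finset.range n, τ (x ^ (n - 1 - i) * (v * x ^ i)) = τ (x ^ (n - 1) * v) := by
    intro i hi
    have hi : i ≤ n - 1 := Nat.le_sub_one_of_lt (Finset.mem_range.mp hi)
    rw [← mul_assoc, hτ, ← mul_assoc, ← pow_add, Nat.add_sub_cancel' hi]
  simp [mul_assoc, Finset.sum_congr rfl cyclic]

theorem opNorm_mul_pow_le (a : A) (k : ℕ) : ‖ContinuousLinearMap.mul 𝕜 A (a ^ k)‖ ≤ ‖a‖ ^ k := by
  refine ContinuousLinearMap.opNorm_le_bound _ (by positivity) fun v => ?_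
  rw [ContinuousLinearMap.mul_apply']
  induction k with
  | zero => simp
  | succ k ih =>
    calc ‖a ^ (k + 1) * v‖ = ‖a * (a ^ k * v)‖ := by rw [pow_succ', mul_assoc]
      _ ≤ ‖a‖ * (‖a‖ ^ k * ‖v‖) := norm_mul_le_of_le le_rfl ih
      _ = ‖a‖ ^ (k + 1) * ‖v‖ := by ring

theorem tsum_comp_mul_one_sub_pow [HasSummableGeomSeries A] (τ : A →L[𝕜] F) {a : A}
    (ha : ‖a - 1‖ < 1) :
    ∑' k : ℕ, τ.comp (ContinuousLinearMap.mul 𝕜 A ((1 - a) ^ k)) =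
      τ.comp (ContinuousLinearMap.mul 𝕜 A (Ring.inverse a)) := by
  have geom : HasSum (fun k : ℕ => (1 - a) ^ k) (Ring.inverse a) := by
    simpa only [sub_sub_cancel] using hasSum_geom_series_inverse (1 - a) (norm_sub_rev a 1 ▸ ha)
  exact ((ContinuousLinearMap.compL 𝕜 A A F τ).hasSum
    ((ContinuousLinearMap.mul 𝕜 A).hasSum geom)).tsum_eq

variable (𝕜) in
/-- The Mercator series `log a = Σ_{k≥1} (-1)^{k+1} (a - 1)ᵏ / k` in a normed algebra, indexed from
`k = 0` as in `matLog`. Where it is not summable the value is the junk value `0`. -/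
def logSeries (a : A) : A :=
  ∑' k : ℕ, ((-1 : 𝕜) ^ k / (k + 1)) • (a - 1) ^ (k + 1)

variable (𝕜 A) in
theorem logSeries_one : logSeries 𝕜 (1 : A) = 0 := by
  simp [logSeries]

theorem hasFDerivAt_tracial_logSeries_term [CharZero 𝕜] {τ : A →L[𝕜] F}
    (hτ : ∀ a b, τ (a * b) = τ (b * a)) (k : ℕ) (a : A) :
    HasFDerivAt (fun y => τ (((-1 : 𝕜) ^ k / (k + 1)) • (y - 1) ^ (k + 1)))
      (τ.comp (ContinuousLinearMap.mul 𝕜 A ((1 - a) ^ k))) a := by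
  have hpow := ((hasFDerivAt_tracial_pow hτ (k + 1) (a - 1)).comp a
    ((hasFDerivAt_id a).sub_const 1)).const_smul ((-1 : 𝕜) ^ k / (k + 1))
  have hk : (k + 1 : 𝕜) ≠ 0 := Nat.cast_add_one_ne_zero k
  have hneg : (1 - a) ^ k = (-1 : 𝕜) ^ k • (a - 1) ^ k := by
    rw [← smul_pow, neg_one_smul, neg_sub]
  simp only [map_smul]
  refine hpow.congr_fderiv ?_
  ext v
  simp [hneg, ← Nat.cast_smul_eq_nsmul 𝕜, smul_smul, div_mul_cancel₀ _ hk]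

end NontriviallyNormedField

variable [RCLike 𝕜] [NormedAlgebra 𝕜 A] [NormedSpace 𝕜 F] [CompleteSpace A]

variable (𝕜) in
theorem summable_logSeries {a : A} (ha : ‖a - 1‖ < 1) :
    Summable fun k : ℕ => ((-1 : 𝕜) ^ k / (k + 1)) • (a - 1) ^ (k + 1) := by
  refine Summable.of_norm_bounded ((summable_nat_add_iff 1).2
    (summable_geometric_of_lt_one (norm_nonneg _) ha)) fun k => ?_
  have hcoeff : ‖(-1 : 𝕜) ^ k / (k + 1)‖ ≤ 1 := by
    have hk : ‖(k + 1 : 𝕜)‖ = k + 1 := by exact_mod_cast RCLike.norm_natCast (K := 𝕜) (k + 1)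
    rw [norm_div, norm_pow, norm_neg, norm_one, one_pow, hk]
    exact div_le_one_of_le₀ (by simp) (by positivity)
  calc ‖((-1 : 𝕜) ^ k / (k + 1)) • (a - 1) ^ (k + 1)‖
      ≤ ‖(-1 : 𝕜) ^ k / (k + 1)‖ * ‖(a - 1) ^ (k + 1)‖ := norm_smul_le _ _
    _ ≤ 1 * ‖a - 1‖ ^ (k + 1) := by gcongr; exact norm_pow_le' _ k.succ_pos
    _ = ‖a - 1‖ ^ (k + 1) := one_mul _

theorem map_logSeries (τ : A →L[𝕜] F) {a : A} (ha : ‖a - 1‖ < 1) :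
    τ (logSeries 𝕜 a) = ∑' k : ℕ, τ (((-1 : 𝕜) ^ k / (k + 1)) • (a - 1) ^ (k + 1)) :=
  τ.map_tsum (summable_logSeries 𝕜 ha)

variable [CompleteSpace F]

theorem hasFDerivAt_tracial_logSeries {τ : A →L[𝕜] F} (hτ : ∀ a b, τ (a * b) = τ (b * a)) {a : A}
    (ha : ‖a - 1‖ < 1) :
    HasFDerivAt (fun y => τ (logSeries 𝕜 y))
      (τ.comp (ContinuousLinearMap.mul 𝕜 A (Ring.inverse a))) a := by
  let : NormedSpace ℝ A := .restrictScalars ℝ 𝕜 A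
  obtain ⟨r, har, hr⟩ := exists_between ha
  have hr₀ : 0 < r := (norm_nonneg _).trans_lt har
  have ha_mem : a ∈ Metric.ball 1 r := mem_ball_iff_norm.2 har
  have hderiv_le : ∀ (k : ℕ), ∀ y ∈ Metric.ball (1 : A) r,
      ‖τ.comp (ContinuousLinearMap.mul 𝕜 A ((1 - y) ^ k))‖ ≤ ‖τ‖ * r ^ k := by
    intro k y hy
    have hy : ‖1 - y‖ ≤ r := (mem_ball_iff_norm'.1 hy).le
    calc _ ≤ ‖τ‖ * ‖ContinuousLinearMap.mul 𝕜 A ((1 - y) ^ k)‖ := τ.opNorm_comp_le _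
      _ ≤ ‖τ‖ * ‖1 - y‖ ^ k := by gcongr; exact opNorm_mul_pow_le _ k
      _ ≤ ‖τ‖ * r ^ k := by gcongr
  have hseries := hasFDerivAt_tsum_of_isPreconnected
    ((summable_geometric_of_lt_one hr₀.le hr).mul_left ‖τ‖)
    Metric.isOpen_ball (convex_ball (1 : A) r).isPreconnected
    (fun k y _ => hasFDerivAt_tracial_logSeries_term hτ k y) hderiv_le
    (Metric.mem_ball_self hr₀) (by simp) ha_mem
  rw [tsum_comp_mul_one_sub_pow τ ha] at hseries
  refine hseries.congr_of_eventuallyEq ?_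
  filter_upwards [Metric.isOpen_ball.mem_nhds ha_mem] with y hy
  exact map_logSeries τ ((mem_ball_iff_norm.1 hy).trans hr)

theorem hasFDerivAt_tracial_logSeries_mul_left {τ : A →L[𝕜] F}
    (hτ : ∀ a b, τ (a * b) = τ (b * a)) {a b : A} (ha : IsUnit a) (hab : ‖a * b - 1‖ < 1) :
    HasFDerivAt (fun y => τ (logSeries 𝕜 (a * y)))
      (τ.comp (ContinuousLinearMap.mul 𝕜 A (Ring.inverse b))) b := by
  refine ((hasFDerivAt_tracial_logSeries hτ hab).comp b
    (ContinuousLinearMap.mul 𝕜 A a).hasFDerivAt).congr_fderiv ?_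
  ext v
  simp [Ring.inverse_mul (.inl ha), mul_assoc, Ring.inverse_mul_cancel_left a v ha]

theorem stmt16_general {τ : A →L[𝕜] F} (hτ : ∀ a b, τ (a * b) = τ (b * a)) {a b : A}
    (ha : ‖a - 1‖ < 1) (hb : ‖b - 1‖ < 1) (hab : ‖a * b - 1‖ < 1) :
    τ (logSeries 𝕜 (a * b)) = τ (logSeries 𝕜 a) + τ (logSeries 𝕜 b) := by
  let : NormedAlgebra ℝ A := .restrictScalars ℝ 𝕜 A
  let s : Set A := Metric.ball 1 1 ∩ ContinuousLinearMap.mul ℝ A a ⁻¹' Metric.ball 1 1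
  have hs_open : IsOpen s :=
    Metric.isOpen_ball.inter (Metric.isOpen_ball.preimage (ContinuousLinearMap.continuous _))
  have hs_convex : Convex ℝ s :=
    (convex_ball 1 1).inter ((convex_ball 1 1).is_linear_preimage (LinearMap.isLinear _))
  have one_mem : (1 : A) ∈ s := by simpa [s, dist_eq_norm] using ha
  have b_mem : b ∈ s := ⟨mem_ball_iff_norm.2 hb, mem_ball_iff_norm.2 hab⟩
  have hleft : ∀ y ∈ s, HasFDerivAt (fun y => τ (logSeries 𝕜 (a * y)))
      (τ.comp (ContinuousLinearMap.mul 𝕜 A (Ring.inverse y))) y := fun y hy =>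
    hasFDerivAt_tracial_logSeries_mul_left hτ (isUnit_of_norm_sub_one_lt_one ha)
      (mem_ball_iff_norm.1 hy.2)
  have hright : ∀ y ∈ s, HasFDerivAt (fun y => τ (logSeries 𝕜 a) + τ (logSeries 𝕜 y))
      (τ.comp (ContinuousLinearMap.mul 𝕜 A (Ring.inverse y))) y := fun y hy =>
    (hasFDerivAt_tracial_logSeries hτ (mem_ball_iff_norm.1 hy.1)).const_add _
  exact hs_open.eqOn_of_fderiv_eq hs_convex.isPreconnected
    (fun y hy => (hleft y hy).differentiableAt.differentiableWithinAt)
    (fun y hy => (hright y hy).differentiableAt.differentiableWithinAt)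
    (fun y hy => (hleft y hy).fderiv.trans (hright y hy).fderiv.symm)
    one_mem (by simp [logSeries_one]) b_mem

end TracialLog

theorem norm_unitary_mul_sub_one_le {A : Type*} [NormedRing A] [StarRing A] [CStarRing A] {u : A}
    (hu : u ∈ unitary A) (a : A) : ‖u * a - 1‖ ≤ ‖u - 1‖ + ‖a - 1‖ :=
  calc ‖u * a - 1‖ = ‖(u - 1) + u * (a - 1)‖ := by congr 1; noncomm_ring
    _ ≤ ‖u - 1‖ + ‖u * (a - 1)‖ := norm_add_le _ _
    _ = ‖u - 1‖ + ‖a - 1‖ := by rw [CStarRing.norm_mem_unitary_mul _ hu]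

/-- The trace `clmTrace` as a continuous linear functional on `Mat n`. -/
def clmTraceCLM (n : ℕ) : Mat n →L[ℂ] ℂ :=
  LinearMap.toContinuousLinearMap
    ((LinearMap.trace ℂ (EuclideanSpace ℂ (Fin n))).comp (ContinuousLinearMap.coeLM ℂ))

theorem clmTraceCLM_mul_comm {n : ℕ} (f g : Mat n) :
    clmTraceCLM n (f * g) = clmTraceCLM n (g * f) :=
  LinearMap.trace_mul_comm ℂ f.toLinearMap g.toLinearMap

/-- For unitaries `m₁`, `m₂` with `‖mᵢ − 1‖ < 1/2` (ℓ²-operator norm),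
`Tr(log(m₁m₂)) = Tr(log m₁) + Tr(log m₂)`. -/
theorem stmt16 {n : ℕ} (m₁ m₂ : Mat n)
    (hu₁ : m₁ ∈ unitary (Mat n)) (hu₂ : m₂ ∈ unitary (Mat n))
    (h₁ : ‖m₁ - 1‖ < 1 / 2) (h₂ : ‖m₂ - 1‖ < 1 / 2) :
    clmTrace (matLog (m₁ * m₂)) = clmTrace (matLog m₁) + clmTrace (matLog m₂) := by
  have h₁₂ : ‖m₁ * m₂ - 1‖ < 1 := (norm_unitary_mul_sub_one_le hu₁ m₂).trans_lt (by linarith)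
  exact stmt16_general clmTraceCLM_mul_comm (h₁.trans one_half_lt_one)
    (h₂.trans one_half_lt_one) h₁₂
end
end
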